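/- arXiv:math/9903189 — 2 statements merged into one kernel-verified Lean document; each statement's English description precedes it below -/
import Mathlib

section
/- Let V = V₁ ⊕ V₂ be a real Banach space decomposed as a topological direct sum of two closed subspaces with dim V₂ < ∞, and let R > 0. Set S = V₁, Q = {u ∈ V₂ : ‖u‖ ≤ R}, and ∂Q = {u ∈ V₂ : ‖u‖ = R}. Then S and ∂Q link: S ∩ ∂Q = ∅, and for every continuous map γ : V → V with γ(x) = x for all x ∈ ∂Q, one has γ(Q) ∩ S ≠ ∅. -/
open Set Filter

/-!
Composing `γ` with the projection onto `V₂` along `V₁` reduces the theorem to a form of Brouwer's: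
a continuous map from a compact subset `s` of `V₂` to `V₂` which is the identity on the frontier
of `s` attains every value in `s`.

For the latter we follow Milnor and Rogers. If `id + g` is `C¹` on a compact convex set `s`, with
`g` vanishing on the frontier, then for small `t` the map `id + t • g` is a bijection of `s` with
positive Jacobian, hence `∫ x in s, det (1 + t • g' x)` is the volume of `s`. This integral is a
polynomial in `t`, so it is the volume of `s` for `t = 1` as well. A `C¹` retraction of a ball onto
its sphere would have a singular derivative everywhere, so the ball would have volume zero. Finally,
a continuous map without zeros that is the identity near infinity could be smoothed and normalised
to such a retraction.
-/

open MeasureTheory Metric Module Polynomial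
open scoped NNReal Topology

theorem inter_frontier_nonempty_of_isPreconnected {X : Type*} [TopologicalSpace X] {s t : Set X}
    (ht : IsPreconnected t) (hs : (t ∩ s).Nonempty) (hsc : (t ∩ sᶜ).Nonempty) :
    (t ∩ frontier s).Nonempty := by
  by_contra h
  have hcover : t ⊆ interior s ∪ interior sᶜ := by
    rw [← compl_frontier_eq_union_interior]
    exact (disjoint_iff_inter_eq_empty.2 (not_nonempty_iff_eq_empty.1 h)).subset_compl_right
  obtain ⟨x, hx, hxs⟩ := hs
  obtain ⟨y, hy, hys⟩ := hsc
  obtain ⟨z, -, hzs, hzsc⟩ := ht _ _ isOpen_interior isOpen_interior hcover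
    ⟨x, hx, (hcover hx).resolve_right fun h ↦ interior_subset h hxs⟩
    ⟨y, hy, (hcover hy).resolve_left fun h ↦ hys (interior_subset h)⟩
  exact interior_subset hzsc (interior_subset hzs)

section Perturbation

variable {E : Type*} [NormedAddCommGroup E] [NormedSpace ℝ E] {s : Set E} {g : E → E} {c : ℝ≥0}

theorem lipschitzWith_indicator_of_frontier_eq_zero {F : Type*} [SeminormedAddCommGroup F]
    {g : E → F} (hs : IsClosed s) (hg : LipschitzOnWith c g s)
    (hg₀ : ∀ x ∈ frontier s, g x = 0) :
    LipschitzWith c (s.indicator g) := by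
  have norm_le {x y : E} (hx : x ∈ s) (hy : y ∉ s) : ‖g x‖ ≤ c * dist x y := by
    obtain ⟨z, hz, hzs⟩ := inter_frontier_nonempty_of_isPreconnected
      (convex_segment (𝕜 := ℝ) x y).isPreconnected ⟨x, left_mem_segment ℝ x y, hx⟩
      ⟨y, right_mem_segment ℝ x y, hy⟩
    calc ‖g x‖ = dist (g x) (g z) := by rw [hg₀ z hzs, dist_zero_right]
      _ ≤ c * dist x z := hg.dist_le_mul x hx z (hs.frontier_subset hzs)
      _ ≤ c * dist x y := by
        gcongr
        linarith [dist_add_dist_of_mem_segment hz, dist_nonneg (x := z) (y := y)]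
  refine LipschitzWith.of_dist_le_mul fun x y ↦ ?_
  by_cases hx : x ∈ s <;> by_cases hy : y ∈ s
  · simpa [hx, hy] using hg.dist_le_mul x hx y hy
  · simpa [hx, hy] using norm_le hx hy
  · simpa [hx, hy, dist_comm x y] using norm_le hy hx
  · simp only [indicator_of_notMem hx, indicator_of_notMem hy, dist_self]
    positivity

theorem bijective_add_of_lipschitzWith [CompleteSpace E] (hg : LipschitzWith c g) (hc : c < 1) :
    Function.Bijective fun x ↦ x + g x := by
  have happrox : ApproximatesLinearOn (fun x ↦ x + g x)
      (ContinuousLinearEquiv.refl ℝ E : E →L[ℝ] E) univ c := by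
    rw [ApproximatesLinearOn.approximatesLinearOn_iff_lipschitzOnWith, lipschitzOnWith_univ]
    convert hg using 1
    ext x
    simp
  have hc' : Subsingleton E ∨
      c < ‖((ContinuousLinearEquiv.refl ℝ E).symm : E →L[ℝ] E)‖₊⁻¹ := by
    rcases subsingleton_or_nontrivial E with h | h
    · exact .inl h
    · right
      simpa using hc
  exact ⟨injOn_univ.1 (happrox.injOn hc'), happrox.surjective hc'⟩

theorem bijOn_add_of_lipschitzOnWith [CompleteSpace E] (hs : IsClosed s)
    (hg : LipschitzOnWith c g s) (hc : c < 1) (hg₀ : ∀ x ∈ frontier s, g x = 0) :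
    BijOn (fun x ↦ x + g x) s s := by
  let G := s.indicator g
  have hbij : Function.Bijective fun x ↦ x + G x :=
    bijective_add_of_lipschitzWith (lipschitzWith_indicator_of_frontier_eq_zero hs hg hg₀) hc
  have hcompl : (fun x ↦ x + G x) '' sᶜ = sᶜ := by
    refine (image_congr fun x hx ↦ ?_).trans (image_id _)
    simp [G, indicator_of_notMem hx]
  have himage : (fun x ↦ x + G x) '' s = s := by
    rwa [image_compl_eq hbij, compl_inj_iff] at hcompl
  have hbijOn : BijOn (fun x ↦ x + G x) s s :=
    .mk (mapsTo_iff_image_subset.2 himage.le) hbij.1.injOn himage.ge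
  refine hbijOn.congr fun x hx ↦ ?_
  simp [G, indicator_of_mem hx]

end Perturbation

section Determinant

theorem exists_polynomial_eval_eq_det_one_add_smul {R M : Type*} [CommRing R] [Nontrivial R]
    [AddCommGroup M] [Module R M] [Module.Free R M] [Module.Finite R M] (f : M →ₗ[R] M) :
    ∃ p : R[X], p.natDegree ≤ finrank R M ∧ ∀ t, p.eval t = LinearMap.det (1 + t • f) := by
  let b := Free.chooseBasis R M
  let A := LinearMap.toMatrix b b f
  refine ⟨(-A).charpolyRev, ?_, fun t ↦ ?_⟩
  · rw [← Matrix.reverse_charpoly, finrank_eq_card_chooseBasisIndex,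
      ← Matrix.charpoly_natDegree_eq_dim (-A)]
    exact reverse_natDegree_le _
  · rw [← LinearMap.det_toMatrix b, map_add, map_smul, LinearMap.toMatrix_one,
      Matrix.charpolyRev, ← coe_evalRingHom, RingHom.map_det]
    congr 1
    ext i j
    simp [A, Matrix.one_apply, apply_ite, mul_comm t]

theorem eventually_forall_det_one_add_smul_pos {E : Type*} [NormedAddCommGroup E]
    [NormedSpace ℝ E] {K : Set (E →L[ℝ] E)} (hK : IsCompact K) :
    ∀ᶠ t in 𝓝 (0 : ℝ), ∀ A ∈ K, 0 < (1 + t • A).det := by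
  have hcont : Continuous fun q : ℝ × (E →L[ℝ] E) ↦ (1 + q.1 • q.2).det :=
    ContinuousLinearMap.continuous_det.comp (by fun_prop)
  have det_one : (1 : E →L[ℝ] E).det = 1 := map_one LinearMap.det
  exact hK.eventually_forall_of_forall_eventually fun A _ ↦
    hcont.continuousAt.eventually_const_lt (by simp [det_one])

theorem integral_polynomial_eval_eq_of_infinite {α 𝕜 : Type*} [MeasurableSpace α] {μ : Measure α}
    [RCLike 𝕜] {p : α → 𝕜[X]} {n : ℕ} (hp : ∀ x, (p x).natDegree ≤ n) {S : Set 𝕜}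
    (hS : S.Infinite) {c : 𝕜} (hint : ∀ t ∈ S, Integrable (fun x ↦ (p x).eval t) μ)
    (hc : ∀ t ∈ S, ∫ x, (p x).eval t ∂μ = c) (t : 𝕜) : ∫ x, (p x).eval t ∂μ = c := by
  obtain ⟨s, hsS, hs⟩ := hS.exists_subset_card_eq (n + 1)
  have hinj : InjOn id (s : Set 𝕜) := injOn_id _
  let w (i : 𝕜) : 𝕜 := (Lagrange.basis s id i).eval t
  have sum_w : ∑ i ∈ s, w i = 1 := by
    rw [← eval_finsetSum, Lagrange.sum_basis hinj (Finset.card_pos.1 (by lia)), eval_one]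
  have eval_eq (x : α) : (p x).eval t = ∑ i ∈ s, w i * (p x).eval i := by
    have hdeg : (p x).degree < s.card := by
      rw [hs]
      exact degree_le_natDegree.trans_lt (by exact_mod_cast Nat.lt_succ_of_le (hp x))
    conv_lhs => rw [Lagrange.eq_interpolate hinj hdeg]
    simp [Lagrange.interpolate_apply, eval_finsetSum, w, mul_comm]
  calc ∫ x, (p x).eval t ∂μ = ∫ x, ∑ i ∈ s, w i * (p x).eval i ∂μ := by simp_rw [eval_eq]
    _ = ∑ i ∈ s, w i * ∫ x, (p x).eval i ∂μ := by
      rw [integral_finsetSum _ fun i hi ↦ (hint i (hsS hi)).const_mul _]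
      simp_rw [integral_const_mul]
    _ = c := by rw [Finset.sum_congr rfl fun i hi ↦ by rw [hc i (hsS hi)], ← Finset.sum_mul, sum_w,
      one_mul]

end Determinant

section Jacobian

variable {E : Type*} [NormedAddCommGroup E] [NormedSpace ℝ E] [FiniteDimensional ℝ E]
  [MeasurableSpace E] [BorelSpace E] {μ : Measure E} [μ.IsAddHaarMeasure] {s : Set E}
  {f g : E → E} {f' g' : E → E →L[ℝ] E}

theorem setIntegral_det_eq_measureReal_image (hs : MeasurableSet s)
    (hf' : ∀ x ∈ s, HasFDerivWithinAt f (f' x) s x) (hf : InjOn f s)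
    (hdet : ∀ x ∈ s, 0 ≤ (f' x).det) : ∫ x in s, (f' x).det ∂μ = μ.real (f '' s) := by
  calc ∫ x in s, (f' x).det ∂μ = ∫ x in s, |(f' x).det| • (1 : ℝ) ∂μ :=
        setIntegral_congr_fun hs fun x hx ↦ by simp [abs_of_nonneg (hdet x hx)]
    _ = ∫ _ in f '' s, (1 : ℝ) ∂μ :=
        (integral_image_eq_integral_abs_det_fderiv_smul μ hs hf' hf fun _ ↦ 1).symm
    _ = μ.real (f '' s) := by simp

theorem eventually_setIntegral_det_one_add_smul_eq (hs : IsCompact s) {c : ℝ≥0}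
    (hg : LipschitzOnWith c g s) (hg' : ∀ x ∈ s, HasFDerivWithinAt g (g' x) s x)
    (hcont : ContinuousOn g' s) (hg₀ : ∀ x ∈ frontier s, g x = 0) :
    ∀ᶠ t in 𝓝 (0 : ℝ), ∫ x in s, (1 + t • g' x).det ∂μ = μ.real s := by
  have hsmall : ∀ᶠ t : ℝ in 𝓝 0, ‖t‖₊ * c < 1 :=
    (show Continuous fun t : ℝ ↦ ‖t‖₊ * c by fun_prop).continuousAt.eventually_lt_const (by simp)
  filter_upwards [hsmall, eventually_forall_det_one_add_smul_pos (hs.image_of_continuousOn hcont)]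
    with t ht hdet
  have hbij : BijOn (fun x ↦ x + t • g x) s s :=
    bijOn_add_of_lipschitzOnWith hs.isClosed
      ((lipschitzWith_smul t).comp_lipschitzOnWith hg) ht fun x hx ↦ by simp [hg₀ x hx]
  have hderiv (x) (hx : x ∈ s) :
      HasFDerivWithinAt (fun x ↦ x + t • g x) (1 + t • g' x) s x :=
    (hasFDerivWithinAt_id x s).add ((hg' x hx).const_smul t)
  rw [setIntegral_det_eq_measureReal_image hs.measurableSet hderiv hbij.injOn
    fun x hx ↦ (hdet _ (mem_image_of_mem g' hx)).le, hbij.image_eq]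

theorem setIntegral_det_eq_measureReal_of_eqOn_frontier (hs : IsCompact s) (hconv : Convex ℝ s)
    (hf' : ∀ x ∈ s, HasFDerivWithinAt f (f' x) s x) (hcont : ContinuousOn f' s)
    (hid : EqOn f id (frontier s)) : ∫ x in s, (f' x).det ∂μ = μ.real s := by
  let g (x : E) : E := f x - x
  let g' (x : E) : E →L[ℝ] E := f' x - 1
  have hg' (x) (hx : x ∈ s) : HasFDerivWithinAt g (g' x) s x :=
    (hf' x hx).sub (hasFDerivWithinAt_id x s)
  have hg'cont : ContinuousOn g' s := hcont.sub continuousOn_const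
  obtain ⟨C, hC⟩ := hs.exists_bound_of_continuousOn hg'cont
  have hlip : LipschitzOnWith C.toNNReal g s :=
    hconv.lipschitzOnWith_of_nnnorm_hasFDerivWithin_le hg' fun x hx ↦ by
      rw [← norm_toNNReal]
      exact Real.toNNReal_mono (hC x hx)
  have hsmall := eventually_setIntegral_det_one_add_smul_eq (μ := μ) hs hlip hg' hg'cont
    fun x hx ↦ sub_eq_zero.2 (hid hx)
  choose p hpdeg hp using fun x ↦ exists_polynomial_eval_eq_det_one_add_smul (g' x : E →ₗ[ℝ] E)
  have hp (x t) : (p x).eval t = (1 + t • g' x).det := hp x t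
  have hint (t : ℝ) : IntegrableOn (fun x ↦ (p x).eval t) s μ := by
    simp_rw [hp]
    refine ContinuousOn.integrableOn_compact hs ?_
    exact ContinuousLinearMap.continuous_det.comp_continuousOn (by fun_prop)
  calc ∫ x in s, (f' x).det ∂μ = ∫ x in s, (p x).eval 1 ∂μ := by simp [hp, g']
    _ = μ.real s := integral_polynomial_eval_eq_of_infinite hpdeg (infinite_of_mem_nhds 0 hsmall)
      (fun t _ ↦ hint t) (fun t ht ↦ by simp_rw [hp]; exact ht) 1

end Jacobian

section Retraction

variable {E : Type*} [NormedAddCommGroup E] [InnerProductSpace ℝ E] {r : E → E} {K : ℝ}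

theorem det_eq_zero_of_mapsTo_sphere [FiniteDimensional ℝ E] {r' : E →L[ℝ] E} {s : Set E} {x : E}
    (hr : HasFDerivWithinAt r r' s x) (hs : UniqueDiffWithinAt ℝ s x) (hx : x ∈ s) (hK : K ≠ 0)
    (hmaps : MapsTo r s (sphere 0 K)) : r'.det = 0 := by
  by_contra hdet
  have hsurj : Function.Surjective r' :=
    ((Module.End.isUnit_iff _).1 <| (LinearMap.isUnit_iff_isUnit_det _).2 <|
      isUnit_iff_ne_zero.2 hdet).2
  obtain ⟨v, hv⟩ := hsurj (r x)
  have hnorm (y) (hy : y ∈ s) : ‖r y‖ = K := mem_sphere_zero_iff_norm.1 (hmaps hy)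
  have hderiv : HasFDerivWithinAt (fun y ↦ ‖r y‖ ^ 2) (0 : E →L[ℝ] ℝ) s x :=
    (hasFDerivWithinAt_const (K ^ 2) x s).congr (fun y hy ↦ by rw [hnorm y hy]) (by rw [hnorm x hx])
  have hinner := congr($(hs.eq hr.norm_sq hderiv) v)
  exact hK (by simpa [hv, hnorm x hx] using hinner)

theorem not_mapsTo_sphere_of_contDiffOn [FiniteDimensional ℝ E] (hK : 0 < K)
    (hr : ContDiffOn ℝ 1 r (closedBall 0 K)) (hid : EqOn r id (sphere 0 K)) :
    ¬MapsTo r (closedBall 0 K) (sphere 0 K) := by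
  intro hmaps
  borelize E
  have hunique : UniqueDiffOn ℝ (closedBall (0 : E) K) :=
    uniqueDiffOn_convex (convex_closedBall 0 K) <|
      (nonempty_ball.2 hK).mono ball_subset_interior_closedBall
  have hderiv (x) (hx : x ∈ closedBall 0 K) :
      HasFDerivWithinAt r (fderivWithin ℝ r (closedBall 0 K) x) (closedBall 0 K) x :=
    (hr.differentiableOn one_ne_zero x hx).hasFDerivWithinAt
  have hvol : (volume : Measure E).real (closedBall 0 K) = 0 := by
    rw [← setIntegral_det_eq_measureReal_of_eqOn_frontier (isCompact_closedBall 0 K)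
      (convex_closedBall 0 K) hderiv (hr.continuousOn_fderivWithin hunique le_rfl)
      (by rwa [frontier_closedBall _ hK.ne'])]
    exact setIntegral_eq_zero_of_forall_eq_zero fun x hx ↦
      det_eq_zero_of_mapsTo_sphere (hderiv x hx) (hunique x hx) hx hK.ne' hmaps
  exact (ENNReal.toReal_pos (measure_closedBall_pos volume 0 hK).ne'
    measure_closedBall_lt_top.ne).ne' hvol

end Retraction

section Brouwer

theorem exists_contDiff_ne_zero_of_continuous {E : Type*} [NormedAddCommGroup E] [NormedSpace ℝ E]
    [FiniteDimensional ℝ E] {F : E → E} (hF : Continuous F) (hF₀ : ∀ x, F x ≠ 0) (n : ℕ∞) :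
    ∃ G : E → E, ContDiff ℝ n G ∧ (∀ x, G x ≠ 0) ∧ ∀ x, F x = x → G x = x := by
  obtain ⟨h, hh, happrox, hsupp⟩ := (hF.sub continuous_id).exists_contDiff_approx n hF.norm
    fun x ↦ norm_pos_iff.2 (hF₀ x)
  refine ⟨fun x ↦ x + h x, contDiff_id.add hh, fun x hx ↦ (happrox x).ne ?_, fun x hx ↦ ?_⟩
  · calc dist (h x) (F x - x) = ‖-x - (F x - x)‖ := by
          rw [eq_neg_of_add_eq_zero_right hx, dist_eq_norm]
      _ = ‖F x‖ := by rw [sub_sub_eq_add_sub, neg_add_cancel, zero_sub, norm_neg]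
  · have : h x = 0 := Function.notMem_support.1 fun hx' ↦ hsupp hx' (by simp [hx])
    simp [this]

theorem exists_eq_zero_of_eventuallyEq_id {E : Type*} [NormedAddCommGroup E]
    [InnerProductSpace ℝ E] [FiniteDimensional ℝ E] {F : E → E} (hF : Continuous F)
    (hid : F =ᶠ[cocompact E] id) : ∃ x, F x = 0 := by
  by_contra! hF₀
  obtain ⟨G, hG, hG₀, hGid⟩ := exists_contDiff_ne_zero_of_continuous hF hF₀ 1
  rw [← cobounded_eq_cocompact] at hid
  obtain ⟨K, hK, hFid⟩ : ∃ K > 0, ∀ x : E, K ≤ ‖x‖ → F x = x := by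
    obtain ⟨K, -, hFid⟩ := hasBasis_cobounded_norm.eventually_iff.1 hid
    exact ⟨max K 1, by positivity, fun x hx ↦ hFid (le_of_max_le_left hx)⟩
  let r (x : E) : E := (K / ‖G x‖) • G x
  have hr : ContDiff ℝ 1 r :=
    (contDiff_const.div (hG.norm ℝ hG₀) fun x ↦ norm_ne_zero_iff.2 (hG₀ x)).smul hG
  refine not_mapsTo_sphere_of_contDiffOn hK hr.contDiffOn (fun x hx ↦ ?_) fun x _ ↦ ?_
  · have hx : ‖x‖ = K := mem_sphere_zero_iff_norm.1 hx
    simp [r, hGid x (hFid x hx.ge), hx, hK.ne']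
  · simp [r, norm_smul, abs_of_pos hK, hG₀ x]

variable {E : Type*} [AddCommGroup E] [TopologicalSpace E] [IsTopologicalAddGroup E] [Module ℝ E]
  [ContinuousSMul ℝ E] [T2Space E] [FiniteDimensional ℝ E]

theorem surjective_of_eventuallyEq_id_cocompact {F : E → E} (hF : Continuous F)
    (hid : F =ᶠ[cocompact E] id) : Function.Surjective F := by
  intro y
  let φ : E ≃ₜ EuclideanSpace ℝ (Fin (finrank ℝ E)) :=
    (Homeomorph.subRight y).trans (toEuclidean (E := E)).toHomeomorph
  have hφy : φ y = 0 := by simp [φ]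
  obtain ⟨x, hx⟩ := exists_eq_zero_of_eventuallyEq_id (F := φ ∘ F ∘ φ.symm) (by fun_prop) <| by
    filter_upwards [φ.symm.isClosedEmbedding.tendsto_cocompact.eventually hid] with x hx
    simp [hx]
  exact ⟨φ.symm x, φ.injective (hx.trans hφy.symm)⟩

theorem subset_image_of_eqOn_frontier_id {s : Set E} (hs : IsCompact s) {f : E → E}
    (hf : ContinuousOn f s) (hid : EqOn f id (frontier s)) : s ⊆ f '' s := by
  classical
  intro y hy
  have hF : Continuous (s.piecewise f id) :=
    continuous_piecewise hid (by rwa [hs.isClosed.closure_eq]) continuousOn_id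
  have hFid : s.piecewise f id =ᶠ[cocompact E] id := by
    filter_upwards [hs.compl_mem_cocompact] with x hx using s.piecewise_eq_of_notMem _ _ hx
  obtain ⟨x, hx⟩ := surjective_of_eventuallyEq_id_cocompact hF hFid y
  by_cases hxs : x ∈ s
  · exact ⟨x, hxs, by rwa [piecewise_eq_of_mem _ _ _ hxs] at hx⟩
  · rw [piecewise_eq_of_notMem _ _ _ hxs] at hx
    exact absurd (hx ▸ hy : id x ∈ s) hxs

end Brouwer

theorem image_inter_nonempty_of_isCompl {V : Type*} [AddCommGroup V] [TopologicalSpace V]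
    [IsTopologicalAddGroup V] [Module ℝ V] [ContinuousSMul ℝ V] [T2Space V] {V₁ V₂ : Submodule ℝ V}
    (hV₁ : IsClosed (V₁ : Set V)) (hcompl : IsCompl V₁ V₂) [FiniteDimensional ℝ V₂] {s : Set V₂}
    (hs : IsCompact s) (h₀ : 0 ∈ s) {γ : V₂ → V} (hγ : ContinuousOn γ s)
    (hid : ∀ x ∈ frontier s, γ x = x) : (γ '' s ∩ V₁).Nonempty := by
  have htop : Submodule.IsTopCompl V₂ V₁ :=
    (Submodule.IsCompl.isTopCompl_of_isClosed_of_finiteDimensional hcompl hV₁).symm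
  let P : V →L[ℝ] V₂ := V₂.projectionOntoL V₁ htop
  obtain ⟨x, hx, hx₀⟩ := subset_image_of_eqOn_frontier_id hs (P.continuous.comp_continuousOn hγ)
    (fun x hx ↦ by simp [P, hid x hx]) h₀
  exact ⟨γ x, mem_image_of_mem γ hx, (Submodule.projectionOntoL_apply_eq_zero_iff htop).1 hx₀⟩

theorem saddle_point_geometry_links_general {V : Type*} [NormedAddCommGroup V] [NormedSpace ℝ V]
    {V₁ V₂ : Submodule ℝ V} (hV₁ : IsClosed (V₁ : Set V)) (hcompl : IsCompl V₁ V₂)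
    [FiniteDimensional ℝ V₂] {R : ℝ} (hR : 0 < R) :
    (V₁ : Set V) ∩ {u : V | u ∈ V₂ ∧ ‖u‖ = R} = ∅ ∧
    ∀ γ : V → V, ContinuousOn γ {u : V | u ∈ V₂ ∧ ‖u‖ ≤ R} →
      (∀ x ∈ {u : V | u ∈ V₂ ∧ ‖u‖ = R}, γ x = x) →
      (γ '' {u : V | u ∈ V₂ ∧ ‖u‖ ≤ R} ∩ (V₁ : Set V)).Nonempty := by
  constructor
  · rw [eq_empty_iff_forall_notMem]
    rintro u ⟨hu₁, hu₂, hu⟩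
    have : u = 0 := Submodule.disjoint_def.1 hcompl.disjoint u hu₁ hu₂
    exact hR.ne (by simpa [this] using hu)
  · intro γ hγ hfix
    have hQ : {u : V | u ∈ V₂ ∧ ‖u‖ ≤ R} = (↑) '' closedBall (0 : V₂) R := by
      ext u
      simp [and_comm]
    rw [hQ] at hγ ⊢
    rw [← image_comp]
    refine image_inter_nonempty_of_isCompl hV₁ hcompl (isCompact_closedBall 0 R)
      (mem_closedBall_self hR.le)
      (hγ.comp continuous_subtype_val.continuousOn (mapsTo_image _ _)) fun x hx ↦ hfix x ⟨x.2, ?_⟩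
    rw [frontier_closedBall _ hR.ne'] at hx
    simpa using hx

/-- **Example 1: the saddle point geometry links.**
Let `V = V₁ ⊕ V₂` be a real Banach space, a topological direct sum of two
closed subspaces with `dim V₂ < ∞`, and `R > 0`. With `S = V₁`,
`Q = {u ∈ V₂ : ‖u‖ ≤ R}` and `bQ = {u ∈ V₂ : ‖u‖ = R}`, the sets `S` and `bQ`
link: `S ∩ bQ = ∅` and every continuous `γ : V → V` fixing `bQ` satisfies
`γ(Q) ∩ S ≠ ∅`. -/
theorem saddle_point_geometry_links
    {V : Type*} [NormedAddCommGroup V] [NormedSpace ℝ V] [CompleteSpace V]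
    (V₁ V₂ : Submodule ℝ V)
    (hV₁closed : IsClosed (V₁ : Set V)) (hV₂closed : IsClosed (V₂ : Set V))
    (hcompl : IsCompl V₁ V₂) (hfin : FiniteDimensional ℝ V₂)
    (R : ℝ) (hR : 0 < R) :
    ((V₁ : Set V) ∩ { u : V | u ∈ V₂ ∧ ‖u‖ = R } = ∅) ∧
    ∀ γ : V → V, Continuous γ →
      (∀ x ∈ { u : V | u ∈ V₂ ∧ ‖u‖ = R }, γ x = x) →
      (γ '' { u : V | u ∈ V₂ ∧ ‖u‖ ≤ R } ∩ (V₁ : Set V)).Nonempty :=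
  (saddle_point_geometry_links_general hV₁closed hcompl hR).imp_right fun h γ hγ ↦
    h γ hγ.continuousOn
end

section
/- Let K be a compact metric space, E = C(K, ℝ) the Banach space of continuous real functions on K with the supremum norm, and θ : E → ℝ defined by θ(x) = max{x(t) : t ∈ K}. Then θ is convex and continuous, and a continuous linear functional μ ∈ E* belongs to the subdifferential ∂θ(x) = {μ ∈ E* : θ(y) ≥ θ(x) + μ(y − x) for all y ∈ E} if and only if μ is positive (μ(z) ≥ 0 whenever z ≥ 0 pointwise), has mass one (μ(𝟙) = 1 where 𝟙 is the constant function 1), and, viewed via the Riesz representation as a regular Borel measure on K, its support is contained in the set {t ∈ K : x(t) = θ(x)}. -/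
open Set Filter

/-! The functional `θ x = max x` is sublinear, so `μ ∈ ∂θ(x)` means exactly that `μ ≤ θ` and
`μ x = θ x`. Testing `μ ≤ θ` on `-z` with `z ≥ 0` and on `± 1`, it says that `μ` is positive of mass
one. For such `μ` the equality `μ x = θ x` says that `μ` kills the gap `g = θ x - x ≥ 0`, and a
positive functional kills `g ≥ 0` if and only if it is supported on the zero set of `g`: a function
whose support misses that set is a bounded multiple of `g`, and conversely `g` lies within `ε` of
`(g - ε)⁺`, whose support misses that set. -/

section Supremum

variable {ι E : Type*} [Nonempty ι] {f : ι → E → ℝ}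

theorem convexOn_ciSup [AddCommGroup E] [Module ℝ E] {s : Set E}
    (hf : ∀ i, ConvexOn ℝ s (f i)) (hbdd : ∀ x ∈ s, BddAbove (range fun i => f i x)) :
    ConvexOn ℝ s fun x => ⨆ i, f i x := by
  refine ⟨(hf (Classical.arbitrary ι)).1, fun x hx y hy a b ha hb hab => ciSup_le fun i => ?_⟩
  calc f i (a • x + b • y) ≤ a • f i x + b • f i y := (hf i).2 hx hy ha hb hab
    _ ≤ a • (⨆ i, f i x) + b • ⨆ i, f i y := by
      gcongr
      exacts [le_ciSup (hbdd x hx) i, le_ciSup (hbdd y hy) i]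

theorem lipschitzWith_ciSup [PseudoMetricSpace E] {C : NNReal}
    (hf : ∀ i, LipschitzWith C (f i)) (hbdd : ∀ x, BddAbove (range fun i => f i x)) :
    LipschitzWith C fun x => ⨆ i, f i x :=
  .of_le_add_mul C fun x y => ciSup_le fun i =>
    ((hf i).le_add_mul x y).trans (by gcongr; exact le_ciSup (hbdd y) i)

end Supremum

section Subgradient

variable {E : Type*} [AddCommGroup E] [Module ℝ E]

/-- `μ` is a subgradient of `p` at `x`, that is, `μ ∈ ∂p(x)`. Continuity of `μ` is not part of the
notion, so that it makes sense on a real vector space without topology. -/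
def IsSubgradientAt (p : E → ℝ) (x : E) (μ : E →ₗ[ℝ] ℝ) : Prop :=
  ∀ y, p x + μ (y - x) ≤ p y

theorem isSubgradientAt_iff_of_posHomogeneous {p : E → ℝ}
    (hp : ∀ c : ℝ, 0 ≤ c → ∀ x, p (c • x) = c * p x) {x : E} {μ : E →ₗ[ℝ] ℝ} :
    IsSubgradientAt p x μ ↔ (∀ y, μ y ≤ p y) ∧ μ x = p x := by
  refine ⟨fun h => ?_, fun ⟨hle, hx⟩ y => ?_⟩
  · have at_zero := h ((0 : ℝ) • x)
    have at_double := h ((2 : ℝ) • x)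
    rw [hp _ (by norm_num), map_sub, map_smul, smul_eq_mul] at at_zero at_double
    have hx : μ x = p x := by linarith
    refine ⟨fun y => ?_, hx⟩
    simpa only [map_sub, hx, add_sub_cancel] using h y
  · simpa only [map_sub, hx, add_sub_cancel] using hle y

end Subgradient

theorem continuous_div_of_ne_zero_on_tsupport {X 𝕜 : Type*} [TopologicalSpace X]
    [GroupWithZero 𝕜] [TopologicalSpace 𝕜] [ContinuousInv₀ 𝕜] [ContinuousMul 𝕜] {f g : X → 𝕜}
    (hf : Continuous f) (hg : Continuous g) (h : ∀ t ∈ tsupport f, g t ≠ 0) :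
    Continuous (f / g) := by
  refine continuous_of_tsupport fun t ht => hf.continuousAt.div hg.continuousAt (h t ?_)
  rw [div_eq_mul_inv] at ht
  exact tsupport_mul_subset_left ht

section PositiveFunctional

open Topology

theorem map_eq_zero_of_abs_le_smul {E : Type*} [AddCommGroup E] [Lattice E]
    [Module ℝ E] {μ : E →ₗ[ℝ] ℝ} (hμ : Monotone μ) {g z : E} (hg : μ g = 0) {C : ℝ}
    (hz : |z| ≤ C • g) : μ z = 0 := by
  have map_smul_eq_zero : μ (C • g) = 0 := by rw [map_smul, hg, smul_zero]
  apply le_antisymm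
  · exact map_smul_eq_zero ▸ hμ ((le_abs_self z).trans hz)
  · rw [← neg_nonpos, ← map_neg]
    exact map_smul_eq_zero ▸ hμ ((neg_le_abs z).trans hz)

variable {K : Type*} [TopologicalSpace K]

theorem exists_abs_le_smul_of_disjoint_tsupport [CompactSpace K] {g z : C(K, ℝ)} (hg : 0 ≤ g)
    (hz : Disjoint (tsupport z) {t | g t = 0}) : ∃ C : ℝ, |z| ≤ C • g := by
  have g_ne : ∀ t ∈ tsupport z, g t ≠ 0 := fun _ ht => disjoint_left.1 hz ht
  let q : C(K, ℝ) := ⟨z / g, continuous_div_of_ne_zero_on_tsupport z.continuous g.continuous g_ne⟩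
  refine ⟨‖q‖, fun t => ?_⟩
  have z_eq : z t = q t * g t := by
    refine (div_mul_cancel_of_imp fun hgt => ?_).symm
    exact image_eq_zero_of_notMem_tsupport fun ht => g_ne t ht hgt
  calc |z t| = |q t| * |g t| := by rw [z_eq, abs_mul]
    _ = |q t| * g t := congrArg _ (abs_of_nonneg (hg t))
    _ ≤ ‖q‖ * g t := mul_le_mul_of_nonneg_right (q.norm_coe_le_norm t) (hg t)

theorem disjoint_tsupport_posPart_sub (g : C(K, ℝ)) {ε : ℝ} (hε : 0 < ε) :
    Disjoint (tsupport ((g - ε • 1)⁺ : C(K, ℝ))) {t | g t = 0} := by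
  have tsupport_subset : tsupport ((g - ε • 1)⁺ : C(K, ℝ)) ⊆ {t | ε ≤ g t} := by
    refine closure_minimal (fun t ht => ?_) (isClosed_le continuous_const g.continuous)
    by_contra hlt
    exact ht (by simpa [posPart_def] using (not_le.1 hlt).le)
  exact disjoint_left.2 fun t ht hgt => hε.not_ge ((tsupport_subset ht).trans_eq hgt)

theorem map_eq_zero_iff_forall_disjoint_tsupport [CompactSpace K] {μ : C(K, ℝ) →ₗ[ℝ] ℝ}
    (hμ : Monotone μ) {g : C(K, ℝ)} (hg : 0 ≤ g) :
    μ g = 0 ↔ ∀ z : C(K, ℝ), Disjoint (tsupport z) {t | g t = 0} → μ z = 0 := by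
  refine ⟨fun hμg z hz => ?_, fun h => le_antisymm ?_ (map_zero μ ▸ hμ hg)⟩
  · obtain ⟨C, hC⟩ := exists_abs_le_smul_of_disjoint_tsupport hg hz
    exact map_eq_zero_of_abs_le_smul hμ hμg hC
  · have le_eps_mul : ∀ ε > 0, μ g ≤ ε * μ 1 := fun ε hε =>
      calc μ g ≤ μ (ε • 1 + (g - ε • 1)⁺) := hμ (sub_le_iff_le_add'.1 (le_posPart _))
        _ = ε * μ 1 := by
          rw [map_add, map_smul, smul_eq_mul, h _ (disjoint_tsupport_posPart_sub g hε), add_zero]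
    have tendsto_zero : Tendsto (fun ε : ℝ => ε * μ 1) (𝓝[>] 0) (𝓝 0) :=
      ((continuous_mul_const (μ 1)).tendsto' 0 0 (zero_mul _)).mono_left nhdsWithin_le_nhds
    exact ge_of_tendsto tendsto_zero (eventually_mem_nhdsWithin.mono le_eps_mul)

end PositiveFunctional

section MaxFunctional

variable {K : Type*} [TopologicalSpace K] [CompactSpace K]

theorem bddAbove_range_continuousMap (x : C(K, ℝ)) : BddAbove (range x) :=
  (isCompact_range x.continuous).bddAbove

theorem le_ciSup_smul_one (x : C(K, ℝ)) : x ≤ (⨆ t, x t) • 1 := fun t => by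
  simpa using le_ciSup (bddAbove_range_continuousMap x) t

variable [Nonempty K]

theorem forall_map_le_ciSup_iff {μ : C(K, ℝ) →ₗ[ℝ] ℝ} :
    (∀ y : C(K, ℝ), μ y ≤ ⨆ t, y t) ↔ Monotone μ ∧ μ 1 = 1 := by
  refine ⟨fun h => ⟨(monotone_iff_map_nonneg μ).2 fun z hz => ?_, ?_⟩, fun ⟨hμ, one⟩ y => ?_⟩
  · rw [← neg_nonpos, ← map_neg]
    exact (h (-z)).trans (ciSup_le fun t => neg_nonpos.2 (hz t))
  · have le_one : μ 1 ≤ 1 := by simpa using h 1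
    have neg_le : -μ 1 ≤ -1 := by simpa using h (-1)
    exact le_one.antisymm (neg_le_neg_iff.1 neg_le)
  · simpa [one] using hμ (le_ciSup_smul_one y)

theorem isSubgradientAt_ciSup_iff {x : C(K, ℝ)} {μ : C(K, ℝ) →ₗ[ℝ] ℝ} :
    IsSubgradientAt (fun y : C(K, ℝ) => ⨆ t, y t) x μ ↔
      Monotone μ ∧ μ 1 = 1 ∧
        ∀ z : C(K, ℝ), Disjoint (tsupport z) {t | x t = ⨆ s, x s} → μ z = 0 := by
  have homogeneous (c : ℝ) (hc : 0 ≤ c) (y : C(K, ℝ)) : ⨆ t, (c • y) t = c * ⨆ t, y t :=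
    (Real.mul_iSup_of_nonneg hc y).symm
  rw [isSubgradientAt_iff_of_posHomogeneous homogeneous, forall_map_le_ciSup_iff, and_assoc]
  refine and_congr_right fun hμ => and_congr_right fun one => ?_
  let gap : C(K, ℝ) := (⨆ t, x t) • 1 - x
  have map_gap : μ x = (⨆ t, x t) ↔ μ gap = 0 := by
    rw [map_sub, map_smul, one, smul_eq_mul, mul_one, sub_eq_zero, eq_comm]
  have zeros_gap : {t | x t = ⨆ s, x s} = {t | gap t = 0} := by
    ext t
    simp [gap, sub_eq_zero, eq_comm (a := x t)]
  rw [map_gap, zeros_gap,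
    map_eq_zero_iff_forall_disjoint_tsupport hμ (sub_nonneg.2 (le_ciSup_smul_one x))]

theorem subdifferential_of_max_functional_general :
    ConvexOn ℝ univ (fun x : C(K, ℝ) => ⨆ t, x t) ∧
    Continuous (fun x : C(K, ℝ) => ⨆ t, x t) ∧
    ∀ (x : C(K, ℝ)) (μ : C(K, ℝ) →ₗ[ℝ] ℝ),
      IsSubgradientAt (fun y : C(K, ℝ) => ⨆ t, y t) x μ ↔
        (∀ z : C(K, ℝ), 0 ≤ z → 0 ≤ μ z) ∧ μ 1 = 1 ∧
          ∀ z : C(K, ℝ), Disjoint (tsupport z) {t | x t = ⨆ s, x s} → μ z = 0 := by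
  refine ⟨?convex, ?continuous, fun x μ => ?subgradient⟩
  case convex =>
    exact convexOn_ciSup (fun t => (ContinuousMap.evalCLM ℝ t).toLinearMap.convexOn convex_univ)
      fun x _ => bddAbove_range_continuousMap x
  case continuous =>
    have lipschitz_eval (t : K) : LipschitzWith 1 fun x : C(K, ℝ) => x t :=
      .mk_one fun _ _ => ContinuousMap.dist_apply_le_dist t
    exact (lipschitzWith_ciSup lipschitz_eval bddAbove_range_continuousMap).continuous
  case subgradient =>
    rw [isSubgradientAt_ciSup_iff, monotone_iff_map_nonneg]

end MaxFunctional

/-- **Subdifferential of the max functional on `C(K, ℝ)`.**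
Let `K` be a compact metric space, `E = C(K, ℝ)` with the sup norm, and
`θ x = max_{t ∈ K} x t`. Then `θ` is convex and continuous, and
`μ ∈ ∂θ(x) = {μ ∈ E* : θ y ≥ θ x + μ (y - x) for all y}` if and only if `μ` is
positive, has mass one (`μ 𝟙 = 1`), and, as a regular Borel measure on `K`,
has support contained in `{t : x t = θ x}` — the latter expressed by `μ`
vanishing on every `z ∈ E` whose (closed) support misses `{t : x t = θ x}`. -/
theorem subdifferential_of_max_functional
    {K : Type*} [MetricSpace K] [CompactSpace K] [Nonempty K] :
    ConvexOn ℝ Set.univ (fun x : C(K, ℝ) => ⨆ t : K, x t) ∧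
    Continuous (fun x : C(K, ℝ) => ⨆ t : K, x t) ∧
    ∀ (x : C(K, ℝ)) (μ : C(K, ℝ) →L[ℝ] ℝ),
      (∀ y : C(K, ℝ), (⨆ t : K, x t) + μ (y - x) ≤ ⨆ t : K, y t) ↔
        ((∀ z : C(K, ℝ), (∀ t : K, 0 ≤ z t) → 0 ≤ μ z) ∧
         μ 1 = 1 ∧
         ∀ z : C(K, ℝ),
           tsupport (⇑z) ∩ { t : K | x t = ⨆ s : K, x s } = ∅ → μ z = 0) := by
  simp only [← disjoint_iff_inter_eq_empty]
  exact subdifferential_of_max_functional_general.imp_right (.imp_right fun h x μ => h x μ)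
end
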